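/- arXiv:2503.19493 — 2 statements merged into one kernel-verified Lean document; each statement's English description precedes it below -/
import Mathlib

section
/- Let A be a nonempty finite set, γ > 0, 0 < ε ≤ 1/2 with |A| ≥ 2, δ = ε²/|A|, Δ(ε) = {x ∈ Δ(A) : x(a) ≥ δ for all a}, and let f: Δ(ε) → ℝ^A be continuous. Then there exists x ∈ Δ(ε) such that for all a', a'' ∈ A: f_{a''}(x) − f_{a'}(x) > γ implies x(a') ≤ ε. -/
open Classical in
/-- Parity count inside one room. -/
lemma room_parity {X I : Type*} [Fintype I] (c : X → I) (i0 : I) (R : Finset X)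
    (hR : R.card = Fintype.card I) :
    Even ((R.filter (fun x => (R.erase x).image c = Finset.univ.erase i0)).card +
      (if R.image c = Finset.univ then 1 else 0)) := by
  by_cases hc : R.image c = Finset.univ
  · have hinj : Set.InjOn c R := by
      apply Finset.card_image_iff.1
      rw [hc, hR, Finset.card_univ]
    obtain ⟨x, hx, hxi⟩ : ∃ x ∈ R, c x = i0 := by
      have : i0 ∈ R.image c := by rw [hc]; simp
      simpa using this
    have : R.filter (fun x => (R.erase x).image c = Finset.univ.erase i0) = {x} := by
      ext z
      simp only [Finset.mem_filter, Finset.mem_singleton]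
      constructor
      · rintro ⟨hz, h⟩
        by_contra hne
        have : c x ∈ (R.erase z).image c :=
          Finset.mem_image_of_mem _ (Finset.mem_erase.2 ⟨fun h => hne h.symm, hx⟩)
        rw [h, hxi] at this
        simp at this
      · rintro rfl
        refine ⟨hx, ?_⟩
        ext k
        simp only [Finset.mem_image, Finset.mem_erase, Finset.mem_univ, and_true]
        constructor
        · rintro ⟨w, ⟨hw1, hw2⟩, rfl⟩ h
          exact hw1 (hinj hw2 hx (h.trans hxi.symm))
        · intro hk
          have : k ∈ R.image c := by rw [hc]; simp
          obtain ⟨w, hw, rfl⟩ := Finset.mem_image.1 this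
          exact ⟨w, ⟨fun h => hk (by rw [h, hxi]), hw⟩, rfl⟩
    rw [this, if_pos hc]
    simp
  · rw [if_neg hc, add_zero]
    rcases Finset.eq_empty_or_nonempty
      (R.filter (fun x => (R.erase x).image c = Finset.univ.erase i0)) with h0 | ⟨x, hx⟩
    · rw [h0]; simp
    · have hgood : ∀ z ∈ R, (R.erase z).image c = Finset.univ.erase i0 →
          Set.InjOn c (R.erase z) := by
        intro z hz h
        apply Finset.card_image_iff.1
        rw [h, Finset.card_erase_of_mem hz, Finset.card_erase_of_mem (Finset.mem_univ _), hR,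
          Finset.card_univ]
      obtain ⟨hxR, hxg⟩ := Finset.mem_filter.1 hx
      have hcx : c x ≠ i0 := by
        intro h
        apply hc
        rw [← Finset.insert_erase hxR, Finset.image_insert, hxg, h,
          Finset.insert_erase (Finset.mem_univ _)]
      have : c x ∈ (R.erase x).image c := by rw [hxg]; simp [hcx]
      obtain ⟨x', hx', hcc⟩ := Finset.mem_image.1 this
      obtain ⟨hne, hx'R⟩ := Finset.mem_erase.1 hx'
      have : R.filter (fun x => (R.erase x).image c = Finset.univ.erase i0) = {x, x'} := by
        ext z
        simp only [Finset.mem_filter, Finset.mem_singleton, Finset.mem_insert]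
        constructor
        · rintro ⟨hz, h⟩
          by_contra! hne'
          have := hgood z hz h
          exact hne (this (by simp [hx'R, hne'.2.symm]) (by simp [hxR, hne'.1.symm]) hcc)
        · rintro (rfl | rfl)
          · exact ⟨hxR, hxg⟩
          · refine ⟨hx'R, ?_⟩
            rw [← hxg]
            ext k
            simp only [Finset.mem_image, Finset.mem_erase]
            constructor
            · rintro ⟨w, ⟨hw1, hw2⟩, rfl⟩
              by_cases hwx : w = x
              · exact ⟨z, ⟨hne, hx'R⟩, by rw [hwx, hcc]⟩
              · exact ⟨w, ⟨hwx, hw2⟩, rfl⟩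
            · rintro ⟨w, ⟨hw1, hw2⟩, rfl⟩
              by_cases hwx : w = z
              · exact ⟨x, ⟨hne.symm, hxR⟩, by rw [hwx, hcc]⟩
              · exact ⟨w, ⟨hwx, hw2⟩, rfl⟩
      rw [this, Finset.card_pair hne.symm]
      exact even_two

open Classical in
/-- Abstract Sperner parity lemma. -/
lemma sperner_parity {X I : Type*} [Fintype X] [Fintype I] (c : X → I) (i0 : I)
    (RR : Finset (Finset X)) (hcard : ∀ R ∈ RR, R.card = Fintype.card I)
    (hS : ∀ S : Finset X, S.card + 1 = Fintype.card I →
      Even (Finset.univ.filter (fun x => x ∉ S ∧ insert x S ∈ RR)).card) :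
    Even (RR.filter (fun R => R.image c = Finset.univ)).card := by
  have h1 : Even (∑ R ∈ RR, ((R.filter (fun x => (R.erase x).image c =
      Finset.univ.erase i0)).card + (if R.image c = Finset.univ then 1 else 0))) :=
    Finset.even_sum _ (fun R hR => room_parity c i0 R (hcard R hR))
  rw [Finset.sum_add_distrib, ← Finset.card_filter] at h1
  have h2 : ∑ R ∈ RR, (R.filter (fun x => (R.erase x).image c =
      Finset.univ.erase i0)).card =
      ∑ S ∈ Finset.univ.filter (fun S : Finset X => S.card + 1 = Fintype.card I ∧
        S.image c = Finset.univ.erase i0),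
        (Finset.univ.filter (fun x => x ∉ S ∧ insert x S ∈ RR)).card := by
    rw [← Finset.card_sigma, ← Finset.card_sigma]
    refine Finset.card_bij' (fun p _ => ⟨p.1.erase p.2, p.2⟩) (fun p _ => ⟨insert p.2 p.1, p.2⟩)
      ?_ ?_ ?_ ?_
    · rintro ⟨R, x⟩ h
      simp only [Finset.mem_sigma, Finset.mem_filter, Finset.mem_univ, true_and] at h ⊢
      obtain ⟨h1, h2, h3⟩ := h
      refine ⟨⟨?_, h3⟩, by simp, by rwa [Finset.insert_erase h2]⟩
      rw [Finset.card_erase_add_one h2, hcard R h1]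
    · rintro ⟨R, x⟩ h
      simp only [Finset.mem_sigma, Finset.mem_filter, Finset.mem_univ, true_and] at h ⊢
      obtain ⟨⟨h1, h2⟩, h3, h4⟩ := h
      exact ⟨h4, by simp, by rwa [Finset.erase_insert h3]⟩
    · rintro ⟨R, x⟩ h
      simp only [Finset.mem_sigma, Finset.mem_filter, Finset.mem_univ, true_and] at h ⊢
      simp [Finset.insert_erase h.2.1]
    · rintro ⟨R, x⟩ h
      simp only [Finset.mem_sigma, Finset.mem_filter, Finset.mem_univ, true_and] at h ⊢
      simp [Finset.erase_insert h.2.1]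
  have h3 : Even (∑ R ∈ RR, (R.filter (fun x => (R.erase x).image c =
      Finset.univ.erase i0)).card) := by
    rw [h2]
    apply Finset.even_sum
    intro S h
    exact hS S (Finset.mem_filter.1 h).2.1
  exact (Nat.even_add.1 h1).1 h3

/-- Dominant sets (Scarf). -/
def ScarfDom {X I α : Type*} [LinearOrder α] (r : I → X → α) (R : Finset X) : Prop :=
  ∀ y, ∃ i, ∀ z ∈ R, r i y ≤ r i z

open Classical in
/-- One half of the pivot: the room opposite to index `i`. -/
lemma pivot_half {X I α : Type*} [Fintype X] [LinearOrder α] (r : I → X → α)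
    (S : Finset X) (hdom : ScarfDom r S) (f : I → X)
    (hfS : ∀ i, f i ∈ S) (hf : ∀ i, ∀ z ∈ S, r i (f i) ≤ r i z)
    (hsurj : ∀ z ∈ S, ∃ k, f k = z) (i j : I) (hij : i ≠ j) (hfij : f i = f j)
    (hM : ∃ y, ∀ k, k ≠ i → r k (f k) < r k y) :
    ∃ x, (∀ k, k ≠ i → r k (f k) < r k x) ∧
      (∀ y, (∀ k, k ≠ i → r k (f k) < r k y) → r i y ≤ r i x) ∧
      r i x ≤ r i (f i) ∧ x ∉ S ∧ ScarfDom r (insert x S) := by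
  obtain ⟨x, hx, hmax⟩ := Finset.exists_max_image
    (Finset.univ.filter (fun y => ∀ k, k ≠ i → r k (f k) < r k y)) (r i)
    (by obtain ⟨y, hy⟩ := hM; exact ⟨y, by simpa using hy⟩)
  simp only [Finset.mem_filter, Finset.mem_univ, true_and] at hx hmax
  have hbelow : ∀ y, (∀ k, k ≠ i → r k (f k) < r k y) → ∀ z ∈ S, r i y ≤ r i z := by
    intro y hy
    obtain ⟨l, hl⟩ := hdom y
    by_cases hli : l = i
    · exact hli ▸ hl
    · exact absurd (hl _ (hfS l)) (not_le.2 (hy l hli))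
  have hxS : x ∉ S := by
    intro h
    obtain ⟨k, hk⟩ := hsurj x h
    by_cases hki : k = i
    · have := hx j hij.symm
      rw [← hfij, ← hki, hk] at this
      exact lt_irrefl _ this
    · have := hx k hki
      rw [hk] at this
      exact lt_irrefl _ this
  refine ⟨x, hx, hmax, ?_, hxS, ?_⟩
  · exact hbelow x hx _ (hfS i)
  · intro y
    by_cases hy : ∀ k, k ≠ i → r k (f k) < r k y
    · refine ⟨i, fun z hz => ?_⟩
      rcases Finset.mem_insert.1 hz with rfl | hz
      · exact hmax y hy
      · exact hbelow y hy z hz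
    · push Not at hy
      obtain ⟨k, hk, hle⟩ := hy
      refine ⟨k, fun z hz => ?_⟩
      rcases Finset.mem_insert.1 hz with rfl | hz
      · exact hle.trans (hx k hk).le
      · exact hle.trans (hf k z hz)

open Classical in
/-- A dominant door all of whose `M` sets are nonempty lies in exactly two dominant rooms. -/
lemma pivot_two {X I α : Type*} [Fintype X] [Fintype I] [LinearOrder α] (r : I → X → α)
    (hr : ∀ i, Function.Injective (r i))
    (S : Finset X) (hne : S.Nonempty) (hcard : S.card + 1 = Fintype.card I)
    (hdom : ScarfDom r S)
    (hM : ∀ i, ∃ y, ∀ k, k ≠ i → ∃ z ∈ S, r k z < r k y) :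
    (Finset.univ.filter (fun x => x ∉ S ∧ ScarfDom r (insert x S))).card = 2 := by
  choose f hfS hf using fun i => Finset.exists_min_image S (r i) hne
  have hsurj : ∀ z ∈ S, ∃ k, f k = z := by
    intro z hz
    obtain ⟨k, hk⟩ := hdom z
    exact ⟨k, hr k (le_antisymm (hf k z hz) (hk _ (hfS k)))⟩
  have hM' : ∀ i, ∃ y, ∀ k, k ≠ i → r k (f k) < r k y := by
    intro i
    obtain ⟨y, hy⟩ := hM i
    refine ⟨y, fun k hk => ?_⟩
    obtain ⟨z, hz, hzy⟩ := hy k hk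
    exact (hf k z hz).trans_lt hzy
  obtain ⟨i, -, j, -, hij, hfij⟩ := Finset.exists_ne_map_eq_of_card_lt_of_maps_to
    (s := Finset.univ) (t := S) (f := f) (by rw [Finset.card_univ]; omega) (fun k _ => hfS k)
  have hinj : ∀ i j, i ≠ j → f i = f j → ∀ k l, k ≠ i → l ≠ i → f k = f l → k = l := by
    intro i j hij hfij
    have himg : (Finset.univ.erase i).image f = S := by
      ext z
      simp only [Finset.mem_image, Finset.mem_erase, Finset.mem_univ, and_true]
      constructor
      · rintro ⟨k, -, rfl⟩; exact hfS k
      · intro hz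
        obtain ⟨k, hk⟩ := hsurj z hz
        by_cases hki : k = i
        · exact ⟨j, hij.symm, by rw [← hfij, ← hki, hk]⟩
        · exact ⟨k, hki, hk⟩
    have : Set.InjOn f (Finset.univ.erase i : Finset I) := by
      apply Finset.card_image_iff.1
      rw [himg, Finset.card_erase_of_mem (Finset.mem_univ _), Finset.card_univ]
      omega
    intro k l hk hl h
    exact this (by simp [hk]) (by simp [hl]) h
  obtain ⟨x, hx1, hx2, hx3, hx4, hx5⟩ := pivot_half r S hdom f hfS hf hsurj i j hij hfij (hM' i)
  obtain ⟨x', hx1', hx2', hx3', hx4', hx5'⟩ :=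
    pivot_half r S hdom f hfS hf hsurj j i hij.symm hfij.symm (hM' j)
  have hxx : x ≠ x' := by
    rintro rfl
    exact absurd hx3 (not_le.2 (hx1' i hij))
  have key : ∀ i j, i ≠ j → f i = f j → ∀ w, w ∉ S → ScarfDom r (insert w S) →
      (∀ z ∈ insert w S, r i w ≤ r i z) →
      (∀ k, k ≠ i → r k (f k) < r k w) ∧
      (∀ y, (∀ k, k ≠ i → r k (f k) < r k y) → r i y ≤ r i w) := by
    intro i j hij hfij w hwS hw hwi
    constructor
    · intro k hk
      obtain ⟨k', hk'⟩ := hw (f k)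
      have e : f k' = f k := hr k' (le_antisymm (hf k' _ (hfS k))
        (hk' _ (Finset.mem_insert_of_mem (hfS k'))))
      have hlt : r k' (f k) < r k' w := lt_of_le_of_ne (hk' w (Finset.mem_insert_self _ _))
        (fun h => hwS (hr k' h ▸ hfS k))
      have hk'i : k' ≠ i := by
        rintro rfl
        exact absurd (hwi _ (Finset.mem_insert_of_mem (hfS k))) (not_le.2 hlt)
      have := hinj i j hij hfij k' k hk'i hk e
      subst this
      exact hlt
    · intro y hy
      obtain ⟨l, hl⟩ := hw y
      by_cases hli : l = i
      · subst hli; exact hl w (Finset.mem_insert_self _ _)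
      · exact absurd (hl _ (Finset.mem_insert_of_mem (hfS l))) (not_le.2 (hy l hli))
  have : Finset.univ.filter (fun x => x ∉ S ∧ ScarfDom r (insert x S)) = {x, x'} := by
    ext w
    simp only [Finset.mem_filter, Finset.mem_univ, true_and, Finset.mem_insert,
      Finset.mem_singleton]
    constructor
    · rintro ⟨hwS, hw⟩
      obtain ⟨k0, hk0⟩ := hw w
      have hk0ij : k0 = i ∨ k0 = j := by
        obtain ⟨k', hk'⟩ := hw (f k0)
        have e : f k' = f k0 := hr k' (le_antisymm (hf k' _ (hfS k0))
          (hk' _ (Finset.mem_insert_of_mem (hfS k'))))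
        have hlt : r k' (f k0) < r k' w := lt_of_le_of_ne (hk' w (Finset.mem_insert_self _ _))
          (fun h => hwS (hr k' h ▸ hfS k0))
        have hne' : k' ≠ k0 := by
          rintro rfl
          exact absurd (hk0 _ (Finset.mem_insert_of_mem (hfS _))) (not_le.2 hlt)
        by_contra! hcon
        by_cases hk'i : k' = i
        · exact hne' (hinj j i hij.symm hfij.symm k' k0 (hk'i ▸ hij) hcon.2 e)
        · exact hne' (hinj i j hij hfij k' k0 hk'i hcon.1 e)
      rcases hk0ij with rfl | rfl
      · left
        obtain ⟨h1, h2⟩ := key k0 j hij hfij w hwS hw hk0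
        exact hr k0 (le_antisymm (hx2 w h1) (h2 x hx1))
      · right
        obtain ⟨h1, h2⟩ := key k0 i hij.symm hfij.symm w hwS hw hk0
        exact hr k0 (le_antisymm (hx2' w h1) (h2 x' hx1'))
    · rintro (rfl | rfl)
      · exact ⟨hx4, hx5⟩
      · exact ⟨hx4', hx5'⟩
  rw [this, Finset.card_pair hxx]

open Classical in
/-- The lemma of Scarf. -/
lemma scarf {T I α : Type*} [Fintype T] [Nonempty T] [Fintype I] [Nonempty I] [LinearOrder α]
    (r : I → T ⊕ I → α) (hr : ∀ i, Function.Injective (r i))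
    (hbot : ∀ i t, r i (Sum.inr i) < r i (Sum.inl t))
    (htop : ∀ i j t, j ≠ i → r i (Sum.inl t) < r i (Sum.inr j)) (c : T → I) :
    ∃ R : Finset (T ⊕ I), ScarfDom r R ∧ (∃ t, Sum.inl t ∈ R) ∧
      ∀ i, Sum.inr i ∉ R → ∃ t, Sum.inl t ∈ R ∧ c t = i := by
  have i0 : I := Classical.arbitrary I
  have t0 : T := Classical.arbitrary T
  have hbot' : ∀ i j, r i (Sum.inr i) ≤ r i (Sum.inr j) := by
    intro i j
    by_cases h : j = i
    · rw [h]
    · exact ((hbot i t0).trans (htop i j t0 h)).le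
  set c' : T ⊕ I → I := Sum.elim c id with hc'
  set E : Finset (T ⊕ I) := Finset.univ.image Sum.inr with hE
  have hEmem : ∀ z, z ∈ E ↔ ∃ i, z = Sum.inr i := by
    intro z; simp [hE, eq_comm]
  have hEcard : E.card = Fintype.card I := by
    rw [hE, Finset.card_image_of_injective _ Sum.inr_injective, Finset.card_univ]
  have hEnd : ¬ ScarfDom r E := by
    intro h
    obtain ⟨i, hi⟩ := h (Sum.inl t0)
    exact absurd (hi (Sum.inr i) ((hEmem _).2 ⟨i, rfl⟩)) (not_le.2 (hbot i t0))
  set RR : Finset (Finset (T ⊕ I)) := Finset.univ.filter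
    (fun R => (R.card = Fintype.card I ∧ ScarfDom r R) ∨ R = E) with hRR
  have hpar := sperner_parity c' i0 RR (by
      intro R hR
      rcases (Finset.mem_filter.1 hR).2 with h | h
      · exact h.1
      · rw [h, hEcard]) (by
    intro S hS
    have hcardins : ∀ x, x ∉ S → (insert x S).card = Fintype.card I := by
      intro x hx; rw [Finset.card_insert_of_notMem hx, hS]
    by_cases hSE : S ⊆ E
    ·
      obtain ⟨m, hmS, hmE⟩ : ∃ m, Sum.inr m ∉ S ∧ insert (Sum.inr m) S = E := by
        obtain ⟨e, heE, heS⟩ := Finset.exists_mem_notMem_of_card_lt_card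
          (s := S) (t := E) (by omega)
        obtain ⟨m, rfl⟩ := (hEmem e).1 heE
        refine ⟨m, heS, Finset.eq_of_subset_of_card_le ?_ ?_⟩
        · exact Finset.insert_subset heE hSE
        · rw [hEcard, hcardins _ heS]
      have hmem : ∀ i, i ≠ m → Sum.inr i ∈ S := by
        intro i hi
        have : Sum.inr i ∈ insert (Sum.inr m) S := by rw [hmE]; exact (hEmem _).2 ⟨i, rfl⟩
        rcases Finset.mem_insert.1 this with h | h
        · exact absurd (Sum.inr_injective h) hi
        · exact h
      obtain ⟨t, ht⟩ := Finite.exists_max (fun t => r m (Sum.inl t))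
      have : Finset.univ.filter (fun x => x ∉ S ∧ insert x S ∈ RR) =
          {Sum.inr m, Sum.inl t} := by
        ext x
        simp only [Finset.mem_filter, Finset.mem_univ, true_and, Finset.mem_insert,
          Finset.mem_singleton, hRR]
        constructor
        · rintro ⟨hxS, hx⟩
          rcases x with s | i
          · right
            rcases hx with ⟨-, hd⟩ | hd
            · obtain ⟨i, hi⟩ := hd (Sum.inl t)
              have him : i = m := by
                by_contra him
                exact absurd (hi _ (Finset.mem_insert_of_mem (hmem i him))) (not_le.2 (hbot i t))
              subst him
              exact hr i (le_antisymm (ht s) (hi _ (Finset.mem_insert_self _ _)))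
            · have : Sum.inl s ∈ E := by rw [← hd]; exact Finset.mem_insert_self _ _
              obtain ⟨i, hi⟩ := (hEmem _).1 this
              cases hi
          · left
            by_contra hne
            exact hxS (hmem i (fun h => hne (by rw [h])))
        · rintro (rfl | rfl)
          · exact ⟨hmS, Or.inr hmE⟩
          · have htS : Sum.inl t ∉ S := by
              intro h
              obtain ⟨i, hi⟩ := (hEmem _).1 (hSE h)
              cases hi
            refine ⟨htS, Or.inl ⟨hcardins _ htS, ?_⟩⟩
            rintro (s | i)
            · refine ⟨m, fun z hz => ?_⟩
              rcases Finset.mem_insert.1 hz with rfl | hz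
              · exact ht s
              · obtain ⟨i, rfl⟩ := (hEmem _).1 (hSE hz)
                exact (htop m i s (fun h => hmS (h ▸ hz))).le
            · refine ⟨i, fun z hz => ?_⟩
              rcases z with s | j
              · exact (hbot i s).le
              · exact hbot' i j
      have h2 : Even (Finset.univ.filter (fun x => x ∉ S ∧ insert x S ∈ RR)).card := by
        rw [this, Finset.card_pair (by simp)]
        exact even_two
      convert h2
    ·
      obtain ⟨z0, hz0S, hz0E⟩ := Finset.not_subset.1 hSE
      rcases z0 with t | i
      swap
      · exact absurd ((hEmem _).2 ⟨i, rfl⟩) hz0E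
      have heq : Finset.univ.filter (fun x => x ∉ S ∧ insert x S ∈ RR) =
          Finset.univ.filter (fun x => x ∉ S ∧ ScarfDom r (insert x S)) := by
        ext x
        simp only [Finset.mem_filter, Finset.mem_univ, true_and, hRR]
        constructor
        · rintro ⟨h1, h2 | h2⟩
          · exact ⟨h1, h2.2⟩
          · exact absurd (h2 ▸ Finset.mem_insert_of_mem hz0S) hz0E
        · rintro ⟨h1, h2⟩
          exact ⟨h1, Or.inl ⟨hcardins x h1, h2⟩⟩
      suffices h2 : Even (Finset.univ.filter (fun x => x ∉ S ∧ insert x S ∈ RR)).card by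
        convert h2
      rw [heq]
      by_cases hd : ScarfDom r S
      · have h3 := pivot_two r hr S ⟨_, hz0S⟩ hS hd
          (fun i => ⟨Sum.inr i, fun k hk => ⟨_, hz0S, htop k i t hk.symm⟩⟩)
        refine ⟨1, ?_⟩
        convert h3
      · rw [Finset.filter_false_of_mem]
        · simp
        · rintro x - ⟨-, h⟩
          apply hd
          intro y
          obtain ⟨i, hi⟩ := h y
          exact ⟨i, fun z hz => hi z (Finset.mem_insert_of_mem hz)⟩)
  have hEin : E ∈ RR.filter (fun R => R.image c' = Finset.univ) := by
    simp only [Finset.mem_filter, hRR, Finset.mem_univ, true_and, or_true]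
    ext i
    simp only [Finset.mem_image, Finset.mem_univ, iff_true]
    exact ⟨Sum.inr i, (hEmem _).2 ⟨i, rfl⟩, rfl⟩
  obtain ⟨R, hR, hRE⟩ := Finset.exists_mem_ne (s := RR.filter (fun R => R.image c' = Finset.univ))
    (by
      have := Finset.card_pos.2 ⟨E, hEin⟩
      obtain ⟨k, hk⟩ := hpar
      omega) E
  simp only [Finset.mem_filter, hRR, Finset.mem_univ, true_and] at hR
  obtain ⟨h1 | h1, h2⟩ := hR
  swap
  · exact absurd h1 hRE
  refine ⟨R, h1.2, ?_, ?_⟩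
  · by_contra! hno
    apply hRE
    apply Finset.eq_of_subset_of_card_le
    · rintro (t | i) hz
      · exact absurd hz (hno t)
      · exact (hEmem _).2 ⟨i, rfl⟩
    · rw [hEcard, h1.1]
  · intro i hi
    have : i ∈ R.image c' := by rw [h2]; simp
    obtain ⟨z, hz, hzi⟩ := Finset.mem_image.1 this
    rcases z with t | j
    · exact ⟨t, hz, hzi⟩
    · exact absurd (show Sum.inr i ∈ R by rw [← hzi]; exact hz) hi

/-- Grid points of the simplex. -/
abbrev GridPt (I : Type*) [Fintype I] (N : ℕ) : Type _ :=
  {s : I → Fin (N + 1) // ∑ i, (s i : ℕ) = N}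

open Classical in
/-- Existence of grid points above a prescribed vector. -/
lemma grid_above {I : Type*} [Fintype I] (N : ℕ) (b : I → ℕ) (i1 : I) (hb : ∑ i, b i ≤ N) :
    ∃ y : GridPt I N, ∀ i, b i ≤ (y.1 i : ℕ) := by
  set b' : I → ℕ := fun i => b i + if i = i1 then N - ∑ i, b i else 0 with hb'
  have hsum : ∑ i, b' i = N := by
    rw [hb', Finset.sum_add_distrib]
    simp
    omega
  have hle : ∀ i, b' i < N + 1 := by
    intro i
    have := Finset.single_le_sum (f := b') (fun _ _ => Nat.zero_le _) (Finset.mem_univ i)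
    omega
  exact ⟨⟨fun i => ⟨b' i, hle i⟩, by simpa using hsum⟩, fun i => by simp [hb']⟩

open Classical in
/-- Discrete KKM-type lemma on the grid. -/
lemma grid_kkm {I : Type*} [Fintype I] [Nonempty I] (N : ℕ) (c : GridPt I N → I) :
    ∃ (x : GridPt I N) (C : Set I),
      (∀ i, i ∉ C → (x.1 i : ℕ) ≤ Fintype.card I) ∧
      ∀ i ∈ C, ∃ y : GridPt I N, c y = i ∧
        ∀ k, (x.1 k : ℕ) ≤ y.1 k + Fintype.card I ∧ (y.1 k : ℕ) ≤ x.1 k + Fintype.card I := by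
  have i1 : I := Classical.arbitrary I
  obtain ⟨t0, -⟩ := grid_above (I := I) N 0 i1 (by simp)
  have : Nonempty (GridPt I N) := ⟨t0⟩
  set eT := Fintype.equivFin (GridPt I N)
  set eI := Fintype.equivFin I
  let r : I → GridPt I N ⊕ I → ℕ ×ₗ ℕ := fun i => Sum.elim
    (fun s => toLex ((s.1 i : ℕ) + 1, (eT s : ℕ)))
    (fun j => if j = i then toLex (0, 0) else toLex (N + 2, (eI j : ℕ)))
  have hr : ∀ i, Function.Injective (r i) := by
    rintro i (s | j) (t | k) h
    · simp only [r, Sum.elim_inl, EmbeddingLike.apply_eq_iff_eq, Prod.mk.injEq] at h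
      rw [eT.injective (Fin.ext h.2)]
    · have := (s.1 i).2
      by_cases hk : k = i
      · simp [r, hk] at h
      · simp [r, hk] at h
        omega
    · have := (t.1 i).2
      by_cases hk : j = i
      · simp [r, hk] at h
      · simp [r, hk] at h
        omega
    · by_cases hk : k = i <;> by_cases hj : j = i
      · rw [hk, hj]
      · simp [r, hk, hj] at h
      · simp [r, hk, hj] at h
      · simp only [r, Sum.elim_inr, hk, hj, if_false, EmbeddingLike.apply_eq_iff_eq,
          Prod.mk.injEq, true_and] at h
        rw [eI.injective (Fin.ext h)]
  obtain ⟨R, hdom, ⟨x, hx⟩, hcol⟩ := scarf r hr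
    (by
      intro i t
      simp only [r, Sum.elim_inl, Sum.elim_inr, if_true, Prod.Lex.toLex_lt_toLex]
      left; omega)
    (by
      intro i j t hj
      have := (t.1 i).2
      simp only [r, Sum.elim_inl, Sum.elim_inr, hj, if_false, Prod.Lex.toLex_lt_toLex]
      left; omega) c
  let σ : Finset (GridPt I N) := Finset.univ.filter (fun t => Sum.inl t ∈ R)
  have hσ : ∀ t, t ∈ σ ↔ Sum.inl t ∈ R := by simp [σ]
  have hdom' : ∀ y : GridPt I N, ∃ i, Sum.inr i ∉ R ∧ ∀ t ∈ σ, (y.1 i : ℕ) ≤ t.1 i := by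
    intro y
    obtain ⟨i, hi⟩ := hdom (Sum.inl y)
    refine ⟨i, fun h => ?_, fun t ht => ?_⟩
    · have := hi _ h
      simp only [r, Sum.elim_inl, Sum.elim_inr, if_true, Prod.Lex.toLex_le_toLex] at this
      omega
    · have := hi _ ((hσ t).1 ht)
      simp only [r, Sum.elim_inl, Prod.Lex.toLex_le_toLex] at this
      omega
  choose w hwσ hw using fun i => Finset.exists_min_image σ (fun t => (t.1 i : ℕ)) ⟨x, (hσ x).2 hx⟩
  let m : I → ℕ := fun i => if Sum.inr i ∈ R then 0 else ((w i).1 i : ℕ)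
  have hm : ∀ t ∈ σ, ∀ i, m i ≤ (t.1 i : ℕ) := by
    intro t ht i
    by_cases h : Sum.inr i ∈ R
    · simp [m, h]
    · simpa [m, h] using hw i t ht
  have hbig : N < ∑ i, (m i + 1) := by
    by_contra! hcon
    obtain ⟨y, hy⟩ := grid_above N (fun i => m i + 1) i1 hcon
    obtain ⟨i, hi, hle⟩ := hdom' y
    have h1 := hle _ (hwσ i)
    have h2 := hy i
    simp only [m, hi, if_false] at h2
    omega
  rw [Finset.sum_add_distrib] at hbig
  simp only [Finset.sum_const, Finset.card_univ, smul_eq_mul, mul_one] at hbig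
  have hup : ∀ t ∈ σ, ∀ i, (t.1 i : ℕ) ≤ m i + Fintype.card I := by
    intro t ht i
    have h1 : ∑ k, (t.1 k : ℕ) = N := t.2
    have h2 := Finset.add_sum_erase Finset.univ (fun k => (t.1 k : ℕ)) (Finset.mem_univ i)
    have h3 := Finset.add_sum_erase Finset.univ m (Finset.mem_univ i)
    have h4 : ∑ k ∈ Finset.univ.erase i, m k ≤ ∑ k ∈ Finset.univ.erase i, (t.1 k : ℕ) :=
      Finset.sum_le_sum (fun k _ => hm t ht k)
    omega
  have hxσ := (hσ x).2 hx
  refine ⟨x, {i | Sum.inr i ∉ R}, ?_, ?_⟩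
  · intro i hi
    have hi' : Sum.inr i ∈ R := by simpa using hi
    have := hup x hxσ i
    simpa [m, hi'] using this
  · intro i hi
    obtain ⟨y, hy, hyc⟩ := hcol i hi
    refine ⟨y, hyc, fun k => ?_⟩
    have hyσ := (hσ y).2 hy
    have h1 := hup x hxσ k
    have h2 := hup y hyσ k
    have h3 := hm x hxσ k
    have h4 := hm y hyσ k
    omega

/-- Existence of an ε-perfect γ-point on the truncated simplex (fixed-point step). -/
theorem stmt15 {A : Type*} [Fintype A] (hcard : 2 ≤ Fintype.card A)
    (γ ε : ℝ) (hγ : 0 < γ) (hε0 : 0 < ε) (hε : ε ≤ 1 / 2)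
    (f : (A → ℝ) → A → ℝ)
    (hf : ContinuousOn f {x : A → ℝ | ((∀ a, 0 ≤ x a) ∧ ∑ a, x a = 1) ∧
        ∀ a, ε ^ 2 / Fintype.card A ≤ x a}) :
    ∃ x : A → ℝ, ((∀ a, 0 ≤ x a) ∧ ∑ a, x a = 1) ∧
      (∀ a, ε ^ 2 / Fintype.card A ≤ x a) ∧
      ∀ a' a'', γ < f x a'' - f x a' → x a' ≤ ε := by
  have : Nonempty A := Fintype.card_pos_iff.1 (by omega)
  set n : ℝ := (Fintype.card A : ℝ) with hn
  have hn2 : (2 : ℝ) ≤ n := by rw [hn]; exact_mod_cast hcard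
  set δ : ℝ := ε ^ 2 / n with hδ
  have hδ0 : 0 < δ := by positivity
  have hnδ : n * δ = ε ^ 2 := by rw [hδ]; field_simp
  have hδε : δ < ε := by nlinarith
  have hnδ1 : n * δ < 1 := by rw [hnδ]; nlinarith
  set K : Set (A → ℝ) := {x : A → ℝ | ((∀ a, 0 ≤ x a) ∧ ∑ a, x a = 1) ∧ ∀ a, δ ≤ x a} with hK
  have hKc : IsCompact K := by
    refine (isCompact_stdSimplex ℝ A).of_isClosed_subset ?_ (fun x hx => hx.1)
    have h1 : IsClosed (stdSimplex ℝ A) := isClosed_stdSimplex ℝ A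
    have h2 : IsClosed {x : A → ℝ | ∀ a, δ ≤ x a} := by
      simp only [Set.ofPred_forall]
      exact isClosed_iInter (fun a => isClosed_le continuous_const (continuous_apply a))
    exact h1.inter h2
  have hu := hKc.uniformContinuousOn_of_continuous hf
  obtain ⟨η, hη, hη'⟩ := Metric.uniformContinuousOn_iff.1 hu (γ / 2) (by positivity)
  obtain ⟨N, hN⟩ := exists_nat_gt (max (n / η) (n / (ε - δ)))
  have hN1 : n / η < N := (le_max_left _ _).trans_lt hN
  have hN2 : n / (ε - δ) < N := (le_max_right _ _).trans_lt hN
  have hN0 : (0 : ℝ) < N := lt_trans (by positivity) hN1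
  have hN1' : n / N < η := by rw [div_lt_iff₀ hη] at hN1; rw [div_lt_iff₀ hN0]; linarith
  have hN2' : n / N < ε - δ := by
    rw [div_lt_iff₀ (by linarith)] at hN2; rw [div_lt_iff₀ hN0]; linarith
  let p : GridPt A N → A → ℝ := fun s a => δ + (1 - n * δ) * ((s.1 a : ℕ) / N : ℝ)
  have hpδ : ∀ s a, δ ≤ p s a := by
    intro s a
    have : 0 ≤ (1 - n * δ) * ((s.1 a : ℕ) / N : ℝ) := mul_nonneg (by linarith) (by positivity)
    simp only [p]; linarith
  have hpK : ∀ s, p s ∈ K := by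
    intro s
    refine ⟨⟨fun a => hδ0.le.trans (hpδ s a), ?_⟩, hpδ s⟩
    have hs : ∑ a, ((s.1 a : ℕ) : ℝ) = N := by exact_mod_cast s.2
    simp only [p]
    rw [Finset.sum_add_distrib, ← Finset.mul_sum, ← Finset.sum_div Finset.univ (fun a => ((s.1 a : ℕ) : ℝ)), hs, div_self hN0.ne']
    simp only [Finset.sum_const, Finset.card_univ, nsmul_eq_mul]
    rw [← hn]; ring
  choose c hc using fun s => Finite.exists_max (f (p s))
  obtain ⟨x, C, hx1, hx2⟩ := grid_kkm N c
  have hθ : ∀ u : ℝ, 0 ≤ u → (1 - n * δ) * u ≤ u := by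
    intro u hu
    have : 0 ≤ n * δ := by positivity
    nlinarith
  refine ⟨p x, (hpK x).1, (hpK x).2, ?_⟩
  intro a' a'' hlt
  by_cases ha : a' ∈ C
  · exfalso
    obtain ⟨y, hy, hxy⟩ := hx2 a' ha
    have hd : dist (p x) (p y) < η := by
      rw [dist_pi_lt_iff hη]
      intro k
      obtain ⟨h1, h2⟩ := hxy k
      have h1' : ((x.1 k : ℕ) : ℝ) ≤ (y.1 k : ℕ) + n := by rw [hn]; exact_mod_cast h1
      have h2' : ((y.1 k : ℕ) : ℝ) ≤ (x.1 k : ℕ) + n := by rw [hn]; exact_mod_cast h2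
      refine lt_of_le_of_lt ?_ hN1'
      have e : p x k - p y k = (1 - n * δ) * ((((x.1 k : ℕ) : ℝ) - (y.1 k : ℕ)) / N) := by
        simp only [p]; ring
      rw [Real.dist_eq, e, abs_mul, abs_of_nonneg (by linarith : (0:ℝ) ≤ 1 - n * δ)]
      refine (hθ _ (abs_nonneg _)).trans ?_
      rw [abs_div, abs_of_pos hN0]
      gcongr
      rw [abs_le]
      constructor <;> linarith
    have hfd := hη' (p x) (hpK x) (p y) (hpK y) hd
    rw [dist_pi_lt_iff (by positivity)] at hfd
    have e1 := abs_lt.1 (Real.dist_eq _ _ ▸ hfd a')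
    have e2 := abs_lt.1 (Real.dist_eq _ _ ▸ hfd a'')
    have e3 := hc y a''
    rw [hy] at e3
    linarith [e1.1, e1.2, e2.1, e2.2]
  · have h1 : ((x.1 a' : ℕ) : ℝ) ≤ n := by rw [hn]; exact_mod_cast hx1 a' ha
    have h2 : ((x.1 a' : ℕ) / N : ℝ) ≤ n / N := by gcongr
    have h3 := hθ ((x.1 a' : ℕ) / N : ℝ) (by positivity)
    simp only [p]
    linarith
end

section
/- Let A be a nonempty finite set, γ ≥ 0, and u: Δ(A) → ℝ^A a continuous map. Then there exists β ∈ Δ(A) such that β(a) = exp(γ·u_a(β)) / ∑_{ã∈A} exp(γ·u_{ã}(β)) for all a ∈ A; moreover any such β is totally mixed. -/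
/-! Brouwer's theorem on the simplex through Scarf's combinatorial lemma. -/

namespace ScarfBrouwer

set_option linter.unusedSectionVars false
set_option linter.unusedVariables false

open Finset

section comb

variable {I X : Type*} [Fintype I] [DecidableEq I] [Fintype X] [DecidableEq X]

def IsMn (r : I → X → ℕ) (R : Finset X) (i : I) (x : X) : Prop :=
  x ∈ R ∧ ∀ z ∈ R, r i x ≤ r i z

def Dom (r : I → X → ℕ) (R : Finset X) : Prop :=
  ∀ y, ∃ i, ∀ x ∈ R, r i y ≤ r i x

theorem IsMn.uniq {r : I → X → ℕ} (hr : ∀ i, Function.Injective (r i)) {R : Finset X} {i : I}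
    {x y : X} (hx : IsMn r R i x) (hy : IsMn r R i y) : x = y :=
  hr i (le_antisymm (hx.2 y hy.1) (hy.2 x hx.1))

theorem exMn (r : I → X → ℕ) {R : Finset X} (hR : R.Nonempty) (i : I) : ∃ x, IsMn r R i x := by
  obtain ⟨x, hx, h⟩ := exists_min_image R (r i) hR
  exact ⟨x, hx, h⟩

theorem idx_unique {r : I → X → ℕ} (hr : ∀ i, Function.Injective (r i)) {R : Finset X}
    (hD : Dom r R) (hc : R.card = Fintype.card I) {i j : I} {x : X}
    (hi : IsMn r R i x) (hj : IsMn r R j x) : i = j := by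
  choose a ha using exMn r (R := R) ⟨x, hi.1⟩
  let a' : I → R := fun i => ⟨a i, (ha i).1⟩
  have hs : Function.Surjective a' := by
    rintro ⟨y, hy⟩
    obtain ⟨k, hk⟩ := hD y
    exact ⟨k, Subtype.ext (IsMn.uniq hr (ha k) ⟨hy, hk⟩)⟩
  have hb : Function.Bijective a' :=
    (Fintype.bijective_iff_surjective_and_card a').2 ⟨hs, by simp [hc]⟩
  apply hb.1
  apply Subtype.ext
  exact (IsMn.uniq hr (ha i) hi).trans (IsMn.uniq hr (ha j) hj).symm

theorem Dom.mono {r : I → X → ℕ} {R S : Finset X} (h : Dom r R) (hs : S ⊆ R) : Dom r S := by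
  intro y
  obtain ⟨i, hi⟩ := h y
  exact ⟨i, fun x hx => hi x (hs hx)⟩

/-- if `x` is not minimal for `i` in `insert x τ`, the minimum of `τ` is the minimum. -/
theorem mn_insert {r : I → X → ℕ} (hr : ∀ i, Function.Injective (r i)) {τ : Finset X} {x t : X}
    {i : I} (h : ¬ IsMn r (insert x τ) i x) (ht : IsMn r τ i t) : IsMn r (insert x τ) i t := by
  refine ⟨mem_insert_of_mem ht.1, ?_⟩
  intro z hz
  rcases mem_insert.1 hz with rfl | hz
  · by_contra hlt
    push Not at hlt
    apply h
    refine ⟨hz, fun w hw => ?_⟩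
    rcases mem_insert.1 hw with rfl | hw
    · exact le_rfl
    · exact hlt.le.trans (ht.2 w hw)
  · exact ht.2 z hz

def SS (r : I → X → ℕ) (τ : Finset X) (m : I) (y : X) : Prop :=
  ∀ i, i ≠ m → ∃ t ∈ τ, r i t < r i y

def PP (r : I → X → ℕ) (τ : Finset X) (m : I) : Prop :=
  ∀ i j t, IsMn r τ i t → IsMn r τ j t → i ≠ m → j ≠ m → i = j

theorem SS_notMem {r : I → X → ℕ} {τ : Finset X} (hne : τ.Nonempty) {m : I}
    (hP : PP r τ m) (hc : τ.card + 1 = Fintype.card I) {x : X} (hx : SS r τ m x) : x ∉ τ := by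
  intro hxτ
  choose a ha using exMn r hne
  let a' : {i : I // i ≠ m} → τ := fun i => ⟨a i, (ha i).1⟩
  have hinj : Function.Injective a' := by
    rintro ⟨i, hi⟩ ⟨j, hj⟩ h
    have h' : a i = a j := congrArg Subtype.val h
    apply Subtype.ext
    exact hP i j (a i) (ha i) (h' ▸ ha j) hi hj
  have hb : Function.Bijective a' := by
    refine (Fintype.bijective_iff_injective_and_card a').2 ⟨hinj, ?_⟩
    have : Fintype.card {i : I // i ≠ m} = Fintype.card I - 1 := by
      simp [Fintype.card_subtype_compl]
    rw [this]
    simp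
    omega
  obtain ⟨⟨i, hi⟩, h⟩ := hb.2 ⟨x, hxτ⟩
  have h' : a i = x := congrArg Subtype.val h
  obtain ⟨t, ht, hlt⟩ := hx i hi
  have := (ha i).2 t ht
  rw [h'] at this
  omega

theorem room_of_max {r : I → X → ℕ} {τ : Finset X} {m : I} (hD : Dom r τ)
    {x : X} (hx : SS r τ m x) (hmax : ∀ y, SS r τ m y → r m y ≤ r m x) :
    Dom r (insert x τ) := by
  have hxm : ∀ t ∈ τ, r m x ≤ r m t := by
    obtain ⟨i, hi⟩ := hD x
    by_cases him : i = m
    · exact him ▸ hi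
    · obtain ⟨t, ht, hlt⟩ := hx i him
      have := hi t ht
      omega
  intro y
  by_cases hy : SS r τ m y
  · refine ⟨m, fun z hz => ?_⟩
    rcases mem_insert.1 hz with rfl | hz
    · exact hmax y hy
    · exact (hmax y hy).trans (hxm z hz)
  · unfold SS at hy
    push Not at hy
    obtain ⟨i, him, hi⟩ := hy
    refine ⟨i, fun z hz => ?_⟩
    rcases mem_insert.1 hz with rfl | hz
    · obtain ⟨t, ht, hlt⟩ := hx i him
      exact (hi t ht).trans hlt.le
    · exact hi z hz

theorem exists_insert {τ R : Finset X} {n : ℕ} (h : τ ⊆ R) (hc : τ.card + 1 = n)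
    (hR : R.card = n) : ∃ x, x ∉ τ ∧ R = insert x τ := by
  have : (R \ τ).card = 1 := by rw [card_sdiff_of_subset h]; omega
  obtain ⟨x, hx⟩ := card_eq_one.1 this
  have hx' : x ∈ R \ τ := by simp [hx]
  refine ⟨x, (mem_sdiff.1 hx').2, ?_⟩
  rw [← sdiff_union_of_subset h, hx]
  rfl

open Classical in
theorem door_even {r : I → X → ℕ} (hr : ∀ i, Function.Injective (r i)) {τ : Finset X}
    (hc : τ.card + 1 = Fintype.card I) (hne : τ.Nonempty) (hS : ∀ m, ∃ y, SS r τ m y) :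
    Even ((univ.filter fun R : Finset X => (R.card = Fintype.card I ∧ Dom r R) ∧ τ ⊆ R).card) := by
  by_cases hex : ∃ R : Finset X, (R.card = Fintype.card I ∧ Dom r R) ∧ τ ⊆ R
  swap
  · push Not at hex
    rw [filter_false_of_mem]
    · simp
    · rintro R - ⟨h1, h2⟩
      exact hex R h1 h2
  obtain ⟨R0, ⟨hR0c, hR0⟩, hsub⟩ := hex
  have hDτ : Dom r τ := hR0.mono hsub
  obtain ⟨x0, hx0, rfl⟩ := exists_insert hsub hc hR0c
  obtain ⟨k, hk⟩ := hR0 x0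
  have hk0 : IsMn r (insert x0 τ) k x0 := ⟨mem_insert_self _ _, hk⟩
  have hnk : ∀ i, i ≠ k → ¬ IsMn r (insert x0 τ) i x0 := fun i hik h =>
    hik (idx_unique hr hR0 hR0c h hk0)
  have hPk : PP r τ k := fun i j t hi hj hik hjk =>
    idx_unique hr hR0 hR0c (mn_insert hr (hnk i hik) hi) (mn_insert hr (hnk j hjk) hj)
  obtain ⟨t, ht⟩ := exMn r hne k
  obtain ⟨l, hl⟩ := hR0 t
  have hlk : l ≠ k := by
    rintro rfl
    have := IsMn.uniq hr hk0 ⟨mem_insert_of_mem ht.1, hl⟩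
    exact hx0 (this ▸ ht.1)
  have hlt : IsMn r τ l t := ⟨ht.1, fun z hz => hl z (mem_insert_of_mem hz)⟩
  have hPl : PP r τ l := by
    intro i j t' hi hj hil hjl
    by_cases hik : i = k
    · subst hik
      have := IsMn.uniq hr hi ht
      subst this
      by_contra hij
      exact hjl (hPk j l _ hj hlt (Ne.symm hij) hlk)
    · by_cases hjk : j = k
      · subst hjk
        have := IsMn.uniq hr hj ht
        subst this
        exact absurd (hPk i l _ hi hlt hik hlk) hil
      · exact hPk i j t' hi hj hik hjk
  have hmax : ∀ m, ∃ x, SS r τ m x ∧ ∀ y, SS r τ m y → r m y ≤ r m x := by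
    intro m
    obtain ⟨y, hy⟩ := hS m
    obtain ⟨x, hx, h⟩ := exists_max_image (univ.filter (SS r τ m)) (r m) ⟨y, by simp [hy]⟩
    refine ⟨x, by simpa using hx, fun y hy => h y (by simp [hy])⟩
  choose x hx hxmax using hmax
  have hnot : ∀ m, PP r τ m → x m ∉ τ := fun m hP => SS_notMem hne hP hc (hx m)
  have hset : (univ.filter fun R : Finset X => (R.card = Fintype.card I ∧ Dom r R) ∧ τ ⊆ R)
      = {insert (x k) τ, insert (x l) τ} := by
    ext R
    simp only [mem_filter, mem_univ, true_and, mem_insert, mem_singleton]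
    constructor
    · rintro ⟨⟨hRc, hRD⟩, hs⟩
      obtain ⟨w, hw, rfl⟩ := exists_insert hs hc hRc
      obtain ⟨m, hm⟩ := hRD w
      have hm0 : IsMn r (insert w τ) m w := ⟨mem_insert_self _ _, hm⟩
      have hnm : ∀ i, i ≠ m → ¬ IsMn r (insert w τ) i w := fun i hik h =>
        hik (idx_unique hr hRD hRc h hm0)
      have hmkl : m = k ∨ m = l := by
        by_contra hcon
        push Not at hcon
        exact hlk (idx_unique hr hRD hRc (mn_insert hr (hnm l hcon.2.symm) hlt)
          (mn_insert hr (hnm k hcon.1.symm) ht))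
      have hwS : SS r τ m w := by
        intro i him
        by_contra hcon
        push Not at hcon
        apply hnm i him
        refine ⟨mem_insert_self _ _, fun z hz => ?_⟩
        rcases mem_insert.1 hz with rfl | hz
        · exact le_rfl
        · exact hcon z hz
      have hwx : w = x m := by
        apply hr m
        refine le_antisymm (hxmax m w hwS) ?_
        obtain ⟨i, hi⟩ := hRD (x m)
        by_cases him : i = m
        · subst him
          exact hi w (mem_insert_self _ _)
        · obtain ⟨s, hs, hlt⟩ := hx m i him
          have := hi s (mem_insert_of_mem hs)
          omega
      rw [hwx]
      rcases hmkl with rfl | rfl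
      · exact Or.inl rfl
      · exact Or.inr rfl
    · have key : ∀ m, PP r τ m → ((insert (x m) τ).card = Fintype.card I ∧
          Dom r (insert (x m) τ)) ∧ τ ⊆ insert (x m) τ := fun m hP =>
        ⟨⟨by rw [card_insert_of_notMem (hnot m hP), hc], room_of_max hDτ (hx m) (hxmax m)⟩,
          subset_insert _ _⟩
      rintro (rfl | rfl)
      · exact key k hPk
      · exact key l hPl
  rw [hset, card_pair]
  · exact even_two
  · intro h
    have h1 : x k ∈ insert (x l) τ := h ▸ mem_insert_self _ _
    rcases mem_insert.1 h1 with h1 | h1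
    · obtain ⟨i, hi⟩ := hDτ (x k)
      by_cases hik : i = k
      · have hil : i ≠ l := by rw [hik]; exact hlk.symm
        obtain ⟨s, hs, h2⟩ := hx l i hil
        have := hi s hs
        rw [h1] at this
        omega
      · obtain ⟨s, hs, h2⟩ := hx k i hik
        have := hi s hs
        omega
    · exact hnot k hPk h1

/-- The doors of colour `I \ i0` inside a room. -/
theorem room_doors (c : X → I) (i0 : I) {R : Finset X} (hR : R.card = Fintype.card I)
    (hnr : R.image c ≠ univ) :
    Even ((univ.filter fun τ : Finset X =>
      (τ.card + 1 = Fintype.card I ∧ τ.image c = univ.erase i0) ∧ τ ⊆ R).card) := by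
  by_cases hex : ∃ τ : Finset X,
      (τ.card + 1 = Fintype.card I ∧ τ.image c = univ.erase i0) ∧ τ ⊆ R
  swap
  · push Not at hex
    rw [filter_false_of_mem]
    · simp
    · rintro R - ⟨h1, h2⟩
      exact hex R h1 h2
  obtain ⟨τ, ⟨hτc, hτ⟩, hs⟩ := hex
  obtain ⟨x, hx, rfl⟩ := exists_insert hs hτc hR
  have hcx : c x ≠ i0 := by
    intro h
    apply hnr
    rw [image_insert, hτ, h, insert_erase (mem_univ _)]
  have hinj : Set.InjOn c τ := by
    apply card_image_iff.1
    rw [hτ, card_erase_of_mem (mem_univ _), card_univ]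
    omega
  have : c x ∈ τ.image c := by rw [hτ]; simp [hcx]
  obtain ⟨y, hy, hyx⟩ := mem_image.1 this
  have hxy : x ≠ y := by rintro rfl; exact hx hy
  have hset : (univ.filter fun σ : Finset X =>
      (σ.card + 1 = Fintype.card I ∧ σ.image c = univ.erase i0) ∧ σ ⊆ insert x τ)
      = {τ, insert x (τ.erase y)} := by
    ext σ
    simp only [mem_filter, mem_univ, true_and, mem_insert, mem_singleton]
    constructor
    · rintro ⟨⟨h1, h2⟩, h3⟩
      obtain ⟨w, hw, hws⟩ := exists_insert h3 h1 hR
      have hσ : σ = (insert x τ).erase w := by rw [hws, erase_insert hw]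
      have hwm : w ∈ insert x τ := by rw [hws]; exact mem_insert_self _ _
      rcases mem_insert.1 hwm with rfl | hwτ
      · left; rw [hσ, erase_insert hx]
      · right
        have hwx : x ≠ w := by rintro rfl; exact hx hwτ
        have hwy : w = y := by
          have hcw : c w ∈ σ.image c := by
            rw [h2, ← hτ]; exact mem_image_of_mem _ hwτ
          obtain ⟨v, hv, hvw⟩ := mem_image.1 hcw
          have hvm := h3 hv
          have hne : v ≠ w := by rintro rfl; exact hw hv
          rcases mem_insert.1 hvm with rfl | hvτ
          · exact hinj hwτ hy (hvw.symm.trans hyx.symm)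
          · exact absurd (hinj hvτ hwτ hvw) hne
        rw [hσ, hwy, erase_insert_of_ne hxy]
    · rintro (rfl | rfl)
      · exact ⟨⟨hτc, hτ⟩, hs⟩
      · have hxe : x ∉ τ.erase y := fun h => hx (mem_of_mem_erase h)
        refine ⟨⟨?_, ?_⟩, insert_subset_insert _ (erase_subset _ _)⟩
        · rw [card_insert_of_notMem hxe, card_erase_add_one hy, hτc]
        · rw [image_insert, ← hyx, ← image_insert, insert_erase hy, hτ]
  rw [hset, card_pair]
  · exact even_two
  · intro h
    apply hx
    rw [h]
    exact mem_insert_self _ _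

open Classical in
theorem scarf {r : I → X → ℕ} (hr : ∀ i, Function.Injective (r i)) (e : I → X)
    (he : Function.Injective e)
    (h1 : ∀ i y, r i (e i) ≤ r i y) (h2 : ∀ i j t, j ≠ i → t ∉ Set.range e → r i t < r i (e j))
    (t0 : X) (ht0 : t0 ∉ Set.range e) (c : X → I) (hce : ∀ i, c (e i) = i) (i0 : I) :
    ∃ R : Finset X, Dom r R ∧ R.image c = univ := by
  by_contra hcon
  push Not at hcon
  let rooms := univ.filter fun R : Finset X => R.card = Fintype.card I ∧ Dom r R
  let doors := univ.filter fun τ : Finset X =>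
    τ.card + 1 = Fintype.card I ∧ τ.image c = univ.erase i0
  have hdc := sum_card_bipartiteAbove_eq_sum_card_bipartiteBelow
    (s := rooms) (t := doors) (fun R τ => τ ⊆ R)
  have hL : Even (∑ R ∈ rooms, (doors.bipartiteAbove (fun R τ => τ ⊆ R) R).card) := by
    apply even_sum
    intro R hR
    simp only [rooms, mem_filter, mem_univ, true_and] at hR
    have := room_doors c i0 hR.1 (hcon R hR.2)
    simpa only [bipartiteAbove, doors, filter_filter] using this
  rw [hdc] at hL
  let τ0 : Finset X := (univ.erase i0).image e
  have hcp : 0 < Fintype.card I := Fintype.card_pos_iff.2 ⟨i0⟩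
  have hτ0c : τ0.card + 1 = Fintype.card I := by
    simp only [τ0]
    rw [card_image_of_injective _ he, card_erase_of_mem (mem_univ _), card_univ]
    omega
  have hτ0 : τ0 ∈ doors := by
    simp only [doors, mem_filter, mem_univ, true_and]
    refine ⟨hτ0c, ?_⟩
    simp only [τ0, image_image]
    have : c ∘ e = id := funext hce
    rw [this, image_id]
  rw [← add_sum_erase _ _ hτ0] at hL
  have hrest : Even (∑ τ ∈ doors.erase τ0,
      (rooms.bipartiteBelow (fun R τ => τ ⊆ R) τ).card) := by
    apply even_sum
    intro τ hτ
    obtain ⟨hne, hτd⟩ := mem_erase.1 hτ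
    simp only [doors, mem_filter, mem_univ, true_and] at hτd
    have hT : ∃ t ∈ τ, t ∉ Set.range e := by
      by_contra hno
      push Not at hno
      apply hne
      apply eq_of_subset_of_card_le
      · intro t ht
        obtain ⟨i, rfl⟩ := hno t ht
        apply mem_image_of_mem
        have : c (e i) ∈ τ.image c := mem_image_of_mem _ ht
        rwa [hτd.2, hce] at this
      · omega
    obtain ⟨t, ht, htr⟩ := hT
    have := door_even hr hτd.1 ⟨t, ht⟩
      (fun m => ⟨e m, fun i him => ⟨t, ht, h2 i m t him.symm htr⟩⟩)
    simpa only [bipartiteBelow, rooms, filter_filter] using this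
  have hone : (rooms.bipartiteBelow (fun R τ => τ ⊆ R) τ0).card = 1 := by
    have hslack : ∀ i, i ≠ i0 → e i ∈ τ0 := fun i hi => mem_image_of_mem _ (by simp [hi])
    -- existence
    obtain ⟨x, hx, hxm⟩ := exists_max_image (univ.filter (· ∉ Set.range e)) (r i0)
      ⟨t0, by simpa using ht0⟩
    have hx' : x ∉ Set.range e := (mem_filter.1 hx).2
    have hxτ : x ∉ τ0 := by
      intro h
      obtain ⟨i, -, hi⟩ := mem_image.1 h
      exact hx' ⟨i, hi⟩
    have hτe : ∀ z ∈ τ0, ∃ j, j ≠ i0 ∧ e j = z := by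
      intro z hz
      obtain ⟨i, hi, hi'⟩ := mem_image.1 hz
      exact ⟨i, (mem_erase.1 hi).1, hi'⟩
    have hdom : Dom r (insert x τ0) := by
      intro y
      by_cases hy : y ∈ Set.range e
      · obtain ⟨i, rfl⟩ := hy
        exact ⟨i, fun z _ => h1 i z⟩
      · refine ⟨i0, fun z hz => ?_⟩
        rcases mem_insert.1 hz with rfl | hz
        · exact hxm y (by simpa using hy)
        · obtain ⟨j, hj, rfl⟩ := hτe z hz
          exact (h2 i0 j y hj hy).le
    -- uniqueness
    have huniq : ∀ a b, a ∉ τ0 → b ∉ τ0 → Dom r (insert a τ0) → Dom r (insert b τ0) →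
        r i0 b ≤ r i0 a := by
      intro a b ha hb hA hB
      obtain ⟨i, hi⟩ := hA b
      by_cases hii : i = i0
      · subst hii
        exact hi a (mem_insert_self _ _)
      · have h3 := hi (e i) (mem_insert_of_mem (hslack i hii))
        have := hr i (le_antisymm h3 (h1 i b))
        exact absurd (this ▸ hslack i hii) hb
    rw [card_eq_one]
    refine ⟨insert x τ0, ?_⟩
    ext R
    simp only [bipartiteBelow, rooms, mem_filter, mem_univ, true_and, mem_singleton]
    constructor
    · rintro ⟨⟨hRc, hRD⟩, hs⟩
      obtain ⟨w, hw, rfl⟩ := exists_insert hs hτ0c hRc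
      have : w = x := hr i0 (le_antisymm (huniq x w hxτ hw hdom hRD) (huniq w x hw hxτ hRD hdom))
      rw [this]
    · rintro rfl
      exact ⟨⟨by rw [card_insert_of_notMem hxτ, hτ0c], hdom⟩, subset_insert _ _⟩
  rw [hone] at hL
  rcases hL with ⟨a, ha⟩
  rcases hrest with ⟨b, hb⟩
  omega

end comb


section grid

variable {I : Type*} [Fintype I] [DecidableEq I]

noncomputable def enc (N : ℕ) (t : {x : I → ℕ // x ∈ piAntidiag (univ : Finset I) N}) : ℕ :=
  (Fintype.equivFin _ t : ℕ)

noncomputable def gcard (I : Type*) [Fintype I] [DecidableEq I] (N : ℕ) : ℕ :=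
  Fintype.card {x : I → ℕ // x ∈ piAntidiag (univ : Finset I) N}

theorem enc_lt (N : ℕ) (t : {x : I → ℕ // x ∈ piAntidiag (univ : Finset I) N}) :
    enc N t < gcard I N := (Fintype.equivFin _ t).2

theorem enc_inj (N : ℕ) : Function.Injective (enc (I := I) N) := fun a b h =>
  (Fintype.equivFin _).injective (Fin.ext h)

noncomputable def rk (N : ℕ) (i : I) :
    {x : I → ℕ // x ∈ piAntidiag (univ : Finset I) N} ⊕ I → ℕ
  | Sum.inl t => 1 + (t.1 i * gcard I N + enc N t)
  | Sum.inr j => if j = i then 0 else 1 + (N + 1) * gcard I N + (Fintype.equivFin I j : ℕ)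

theorem sum_of_mem {N : ℕ} (t : {x : I → ℕ // x ∈ piAntidiag (univ : Finset I) N}) :
    ∑ i, t.1 i = N := (mem_piAntidiag.1 t.2).1

theorem le_of_mem {N : ℕ} (t : {x : I → ℕ // x ∈ piAntidiag (univ : Finset I) N}) (i : I) :
    t.1 i ≤ N := by
  refine le_trans ?_ (sum_of_mem t).le
  exact single_le_sum (f := t.1) (fun _ _ => Nat.zero_le _) (mem_univ i)

theorem rk_lt {N : ℕ} (i : I) (t : {x : I → ℕ // x ∈ piAntidiag (univ : Finset I) N}) :
    rk N i (Sum.inl t) < 1 + (N + 1) * gcard I N := by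
  simp only [rk]
  have h1 := enc_lt N t
  have h2 := Nat.mul_le_mul_right (gcard I N) (le_of_mem t i)
  rw [add_mul]
  omega

theorem rk_le {N : ℕ} (i : I) {s t : {x : I → ℕ // x ∈ piAntidiag (univ : Finset I) N}}
    (h : rk N i (Sum.inl s) ≤ rk N i (Sum.inl t)) : s.1 i ≤ t.1 i := by
  simp only [rk] at h
  have h1 := enc_lt N t
  by_contra hlt
  push Not at hlt
  have h2 := Nat.mul_le_mul_right (gcard I N) (Nat.succ_le_of_lt hlt)
  rw [Nat.succ_mul] at h2
  omega

theorem rk_inj (N : ℕ) (i : I) : Function.Injective (rk N i) := by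
  rintro (s | j) (t | k) h
  · have h1 := rk_le i h.le
    have h2 := rk_le i h.ge
    have h3 := le_antisymm h1 h2
    simp only [rk, h3] at h
    rw [enc_inj N (by omega : enc N s = enc N t)]
  · have := rk_lt i s
    rw [h] at this
    simp only [rk] at this h
    split_ifs at this h <;> omega
  · have := rk_lt i t
    rw [← h] at this
    simp only [rk] at this h
    split_ifs at this h <;> omega
  · simp only [rk] at h
    split_ifs at h with h1 h2 h2
    · rw [h1, h2]
    · omega
    · omega
    · rw [(Fintype.equivFin I).injective (Fin.ext (by omega) : Fintype.equivFin I j = Fintype.equivFin I k)]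

theorem grid_lemma (N : ℕ) (i0 : I) (c : (I → ℕ) → I) :
    ∃ p : I → ℕ, ∑ i, p i = N ∧ ∀ i, p i ≤ Fintype.card I ∨
      ∃ q : I → ℕ, ∑ i, q i = N ∧ c q = i ∧
        ∀ j, q j ≤ p j + Fintype.card I ∧ p j ≤ q j + Fintype.card I := by
  classical
  have hmem : ∀ f : I → ℕ, ∑ i, f i = N → f ∈ piAntidiag (univ : Finset I) N := fun f hf =>
    mem_piAntidiag.2 ⟨hf, by simp⟩
  let t0 : {x : I → ℕ // x ∈ piAntidiag (univ : Finset I) N} :=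
    ⟨Pi.single i0 N, hmem _ (by simp)⟩
  obtain ⟨R, hD, hR⟩ := scarf (r := rk N) (rk_inj N) Sum.inr Sum.inr_injective
    (by intro i y; simp [rk])
    (by
      rintro i j (t | k) hji ht
      · have := rk_lt i t
        have h3 : rk N i (Sum.inr j) = 1 + (N + 1) * gcard I N + (Fintype.equivFin I j : ℕ) := by
          simp [rk, hji]
        omega
      · exact absurd ⟨k, rfl⟩ ht)
    (Sum.inl t0) (by simp) (Sum.elim (fun t => c t.1) id) (by simp) i0
  let C : Finset I := univ.filter fun i => Sum.inr i ∉ R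
  -- every grid point is dominated through an index of `C`
  have hdom : ∀ y : I → ℕ, ∑ i, y i = N → ∃ i ∈ C, ∀ t, Sum.inl t ∈ R → y i ≤ t.1 i := by
    intro y hy
    obtain ⟨i, hi⟩ := hD (Sum.inl ⟨y, hmem y hy⟩)
    refine ⟨i, ?_, fun t ht => rk_le i (hi _ ht)⟩
    simp only [C, mem_filter, mem_univ, true_and]
    intro hin
    have := hi _ hin
    simp [rk] at this
  have hcol : ∀ i ∈ C, ∃ t, Sum.inl t ∈ R ∧ c t.1 = i := by
    intro i hi
    have : i ∈ R.image (Sum.elim (fun t => c t.1) id) := by rw [hR]; exact mem_univ _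
    obtain ⟨(t | j), hx, hxi⟩ := mem_image.1 this
    · exact ⟨t, hx, hxi⟩
    · have hj : j = i := hxi
      subst hj
      exact absurd hx (mem_filter.1 hi).2
  obtain ⟨j0, hj0, -⟩ := hdom _ (mem_piAntidiag.1 t0.2).1
  obtain ⟨p, hp, -⟩ := hcol j0 hj0
  have hmin : ∀ i, ∃ s, Sum.inl s ∈ R ∧ ∀ t, Sum.inl t ∈ R → s.1 i ≤ t.1 i := by
    intro i
    obtain ⟨s, hs, h⟩ := exists_min_image (univ.filter fun s => Sum.inl s ∈ R)
      (fun s => s.1 i) ⟨p, by simpa using hp⟩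
    exact ⟨s, by simpa using hs, fun t ht => h t (by simpa using ht)⟩
  choose s hs hsm using hmin
  let m : I → ℕ := fun i => (s i).1 i
  have hm : ∀ i t, Sum.inl t ∈ R → m i ≤ t.1 i := fun i t ht => hsm i t ht
  have hbig : N < ∑ i ∈ C, (m i + 1) := by
    by_contra hle
    push Not at hle
    let y : I → ℕ := fun i => (if i ∈ C then m i + 1 else 0) +
      (if i = j0 then N - ∑ i ∈ C, (m i + 1) else 0)
    have hy : ∑ i, y i = N := by
      simp only [y]
      rw [sum_add_distrib, sum_ite_mem, univ_inter, sum_ite_eq' univ j0]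
      simp only [mem_univ, if_true]
      omega
    obtain ⟨i, hi, h⟩ := hdom y hy
    have h3 := h (s i) (hs i)
    simp only [y, hi, if_true] at h3
    change _ ≤ m i at h3
    omega
  have hbig2 : N < ∑ i ∈ C, m i + Fintype.card I := by
    have h3 : ∑ i ∈ C, (m i + 1) = ∑ i ∈ C, m i + C.card := by
      rw [sum_add_distrib]; simp
    have h4 : C.card ≤ Fintype.card I := card_le_univ C
    omega
  have hin : ∀ t, Sum.inl t ∈ R → ∀ i ∈ C, t.1 i ≤ m i + Fintype.card I := by
    intro t ht i hi
    have h3 : ∑ j ∈ C, t.1 j ≤ N := by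
      refine le_trans ?_ (sum_of_mem t).le
      exact sum_le_sum_of_subset (subset_univ C)
    rw [← add_sum_erase _ _ hi] at h3 hbig2
    have h4 : ∑ j ∈ C.erase i, m j ≤ ∑ j ∈ C.erase i, t.1 j := sum_le_sum fun j _ => hm j t ht
    omega
  have hout : ∀ t, Sum.inl t ∈ R → ∀ i, i ∉ C → t.1 i ≤ Fintype.card I := by
    intro t ht i hi
    have h3 : ∑ j ∈ insert i C, t.1 j ≤ N := by
      refine le_trans ?_ (sum_of_mem t).le
      exact sum_le_sum_of_subset (subset_univ _)
    rw [sum_insert hi] at h3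
    have h4 : ∑ j ∈ C, m j ≤ ∑ j ∈ C, t.1 j := sum_le_sum fun j _ => hm j t ht
    omega
  refine ⟨p.1, sum_of_mem p, fun i => ?_⟩
  by_cases hi : i ∈ C
  · right
    obtain ⟨q, hq, hqi⟩ := hcol i hi
    refine ⟨q.1, sum_of_mem q, hqi, fun j => ?_⟩
    by_cases hj : j ∈ C
    · have a1 := hin q hq j hj
      have a2 := hin p hp j hj
      have a3 := hm j q hq
      have a4 := hm j p hp
      omega
    · have a1 := hout q hq j hj
      have a2 := hout p hp j hj
      omega
  · exact Or.inl (hout p hp i hi)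

end grid

theorem brouwer_simplex {I : Type*} [Fintype I] [Nonempty I] (f : (I → ℝ) → I → ℝ)
    (hf : ContinuousOn f (stdSimplex ℝ I)) (hmap : ∀ x ∈ stdSimplex ℝ I, f x ∈ stdSimplex ℝ I) :
    ∃ x ∈ stdSimplex ℝ I, f x = x := by
  classical
  obtain ⟨i0⟩ := ‹Nonempty I›
  have hK : IsCompact (stdSimplex ℝ I) := isCompact_stdSimplex ℝ I
  have hUC := hK.uniformContinuousOn_of_continuous hf
  rw [Metric.uniformContinuousOn_iff] at hUC
  -- approximate solutions
  have happ : ∀ ε > 0, ∃ p ∈ stdSimplex ℝ I, ∀ i, p i ≤ f p i + 2 * ε := by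
    intro ε hε
    obtain ⟨δ, hδ, hU⟩ := hUC ε hε
    obtain ⟨N, hN⟩ := exists_nat_gt ((Fintype.card I : ℝ) / min δ ε)
    have hmin : 0 < min δ ε := lt_min hδ hε
    have hN0 : (0 : ℝ) < N := lt_of_le_of_lt (by positivity) hN
    have hNd : (Fintype.card I : ℝ) / N < min δ ε := by
      rw [div_lt_iff₀ hmin] at hN
      rw [div_lt_iff₀ hN0]
      linarith [mul_comm (N : ℝ) (min δ ε)]
    let g : (I → ℕ) → I → ℝ := fun p i => (p i : ℝ) / N
    have hg : ∀ p : I → ℕ, ∑ i, p i = N → g p ∈ stdSimplex ℝ I := by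
      intro p hp
      refine ⟨fun i => by simp only [g]; positivity, ?_⟩
      simp only [g]
      rw [← sum_div, ← Nat.cast_sum, hp, div_self hN0.ne']
    have hc : ∀ p : I → ℕ, ∃ i, ∑ i, p i = N → g p i ≤ f (g p) i := by
      intro p
      by_contra hcon
      push Not at hcon
      have hp := (hcon i0).1
      have h1 : ∑ i, f (g p) i < ∑ i, g p i :=
        sum_lt_sum_of_nonempty ⟨i0, mem_univ _⟩ fun i _ => (hcon i).2
      rw [(hg p hp).2, (hmap _ (hg p hp)).2] at h1
      exact lt_irrefl _ h1
    choose c hc using hc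
    obtain ⟨p, hp, h⟩ := grid_lemma N i0 c
    refine ⟨g p, hg p hp, fun i => ?_⟩
    rcases h i with h | ⟨q, hq, hqi, hqp⟩
    · have h1 : g p i ≤ (Fintype.card I : ℝ) / N := by
        simp only [g]
        gcongr
      have h2 := (hmap _ (hg p hp)).1 i
      have h3 := min_le_right δ ε
      linarith
    · have hd : ∀ j, |g q j - g p j| ≤ (Fintype.card I : ℝ) / N := by
        intro j
        have e1 : (q j : ℝ) ≤ p j + Fintype.card I := by exact_mod_cast (hqp j).1
        have e2 : (p j : ℝ) ≤ q j + Fintype.card I := by exact_mod_cast (hqp j).2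
        simp only [g]
        rw [← sub_div, abs_div, abs_of_pos hN0]
        gcongr
        rw [abs_le]
        constructor <;> linarith
      have hdist : dist (g q) (g p) < δ := by
        rw [dist_pi_lt_iff hδ]
        intro j
        rw [Real.dist_eq]
        exact (hd j).trans_lt (hNd.trans_le (min_le_left _ _))
      have h4 := hU _ (hg q hq) _ (hg p hp) hdist
      rw [dist_pi_lt_iff hε] at h4
      have h5 := h4 i
      rw [Real.dist_eq] at h5
      have h6 := (abs_lt.1 h5).2
      have h7 := (abs_le.1 (hd i)).1
      have h8 : g q i ≤ f (g q) i := by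
        have := hc q hq
        rwa [hqi] at this
      have h3 := min_le_right δ ε
      linarith
  -- pass to the limit by minimising the total excess
  let G : (I → ℝ) → ℝ := fun x => ∑ i, max (x i - f x i) 0
  have hG : ContinuousOn G (stdSimplex ℝ I) := by
    apply continuousOn_finsetSum
    intro i _
    have h1 : ContinuousOn (fun x => f x i) (stdSimplex ℝ I) :=
      (continuous_apply i).comp_continuousOn hf
    exact ((continuous_apply i).continuousOn.sub h1).sup continuousOn_const
  obtain ⟨p0, hp0, -⟩ := happ 1 one_pos
  obtain ⟨z, hz, hzm⟩ := hK.exists_isMinOn ⟨p0, hp0⟩ hG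
  have hGz : G z ≤ 0 := by
    by_contra hpos
    push Not at hpos
    have hcI : (0 : ℝ) < Fintype.card I := by
      exact_mod_cast Fintype.card_pos_iff.2 ⟨i0⟩
    obtain ⟨p, hp, h⟩ := happ (G z / (4 * Fintype.card I)) (by positivity)
    have h1 : G z ≤ G p := hzm hp
    have h2 : G p ≤ ∑ i : I, 2 * (G z / (4 * Fintype.card I)) :=
      sum_le_sum fun i _ => max_le (by linarith [h i]) (by positivity)
    rw [sum_const, card_univ, nsmul_eq_mul] at h2
    have h3 : (Fintype.card I : ℝ) * (2 * (G z / (4 * Fintype.card I))) = G z / 2 := by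
      field_simp
      norm_num
    linarith
  have hle : ∀ i, z i ≤ f z i := by
    intro i
    have h1 : max (z i - f z i) 0 ≤ G z :=
      single_le_sum (f := fun i => max (z i - f z i) 0) (fun _ _ => le_max_right _ _) (mem_univ i)
    have h2 := le_max_left (z i - f z i) 0
    linarith
  refine ⟨z, hz, ?_⟩
  have heq : ∑ i, z i = ∑ i, f z i := by rw [hz.2, (hmap z hz).2]
  have := (sum_eq_sum_iff_of_le fun i _ => hle i).1 heq
  funext i
  exact (this i (mem_univ i)).symm

end ScarfBrouwer


/-- Existence of a logistic quantal-response fixed point; any such point is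
    totally mixed. -/
theorem stmt18 {A : Type*} [Fintype A] [Nonempty A] (γ : ℝ) (hγ : 0 ≤ γ)
    (u : (A → ℝ) → A → ℝ)
    (hu : ContinuousOn u {x : A → ℝ | (∀ a, 0 ≤ x a) ∧ ∑ a, x a = 1}) :
    (∃ β : A → ℝ, (∀ a, 0 ≤ β a) ∧ (∑ a, β a = 1) ∧
      ∀ a, β a = Real.exp (γ * u β a) / ∑ a2, Real.exp (γ * u β a2)) ∧
    ∀ β : A → ℝ, ((∀ a, 0 ≤ β a) ∧ (∑ a, β a = 1) ∧
      ∀ a, β a = Real.exp (γ * u β a) / ∑ a2, Real.exp (γ * u β a2)) →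
      ∀ a, 0 < β a := by
  have hpos : ∀ β : A → ℝ, 0 < ∑ a2, Real.exp (γ * u β a2) := fun β =>
    Finset.sum_pos (fun _ _ => Real.exp_pos _) Finset.univ_nonempty
  constructor
  · obtain ⟨β, hβ, h⟩ := ScarfBrouwer.brouwer_simplex
      (fun β a => Real.exp (γ * u β a) / ∑ a2, Real.exp (γ * u β a2))
      (by
        have hu' : ∀ a, ContinuousOn (fun β => Real.exp (γ * u β a)) (stdSimplex ℝ A) := fun a =>
          (continuousOn_const.mul ((continuous_apply a).comp_continuousOn hu)).rexp
        apply continuousOn_pi.2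
        intro a
        exact (hu' a).div (continuousOn_finsetSum _ fun i _ => hu' i) fun β _ => (hpos β).ne')
      (by
        intro β _
        refine ⟨fun a => (div_pos (Real.exp_pos _) (hpos β)).le, ?_⟩
        rw [← Finset.sum_div, div_self (hpos β).ne'])
    exact ⟨β, hβ.1, hβ.2, fun a => (congrFun h a).symm⟩
  · rintro β ⟨-, -, h⟩ a
    rw [h a]
    exact div_pos (Real.exp_pos _) (hpos β)
end
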